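/- Static gradual guarantee: if ⊢ t̃1 : S̃1 in the gradual type system and t̃1 ⊑ t̃2 (t̃2 is obtained from t̃1 by making type annotations and labels less precise), then there exists S̃2 with ⊢ t̃2 : S̃2 and S̃1 ⊑ S̃2. -/

import Mathlib

/-!
The theorem is generalized to open terms: if `Γ ⊢ t : S`, `Γ ⊑ Γ'` pointwise and `t ⊑ t'`, then
`Γ' ⊢ t' : S'` for some `S' ⊒ S`, by induction on the typing derivation.

Two facts carry the induction. First, although precision is defined semantically, as inclusion of
concretizations, it is structural (`gtprec_bool_inv`, `gtprec_arrow_inv`), because every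
concretization is nonempty. Second, each operation of the type system is monotone in precision.
Consistent subtyping is existential over concretizations, hence monotone. Label join and meet are
monotone because `alphaL` is monotone on nonempty sets (`alphaL_mono`), and this lifts to stamping
and, by simultaneous induction on types, to the partial subtyping join and meet, which moreover
stay defined when their arguments become less precise.
-/

/-- Static security types: S ::= Bool_ℓ | S →_ℓ S. -/
inductive SType (L : Type) where
  | bool (l : L)
  | arrow (S1 : SType L) (l : L) (S2 : SType L)

variable {L : Type} [Lattice L] [BoundedOrder L]

/-- Static subtyping. -/
inductive SSub : SType L → SType L → Prop where
  | bool {l l' : L} : l ≤ l' → SSub (.bool l) (.bool l')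
  | arrow {S1 S1' S2 S2' : SType L} {l l' : L} :
      SSub S1' S1 → SSub S2 S2' → l ≤ l' →
      SSub (.arrow S1 l S2) (.arrow S1' l' S2')

/-- Label stamping on static types. -/
def SType.stamp : SType L → L → SType L
  | .bool l, l' => .bool (l ⊔ l')
  | .arrow S1 l S2, l' => .arrow S1 (l ⊔ l') S2

mutual
/-- Partial subtyping join ⋎. -/
def sjoin : SType L → SType L → Option (SType L)
  | .bool l, .bool l' => some (.bool (l ⊔ l'))
  | .arrow S11 l S12, .arrow S21 l' S22 => do
      let m ← smeet S11 S21
      let j ← sjoin S12 S22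
      pure (.arrow m (l ⊔ l') j)
  | _, _ => none
/-- Partial subtyping meet ⋏. -/
def smeet : SType L → SType L → Option (SType L)
  | .bool l, .bool l' => some (.bool (l ⊓ l'))
  | .arrow S11 l S12, .arrow S21 l' S22 => do
      let j ← sjoin S11 S21
      let m ← smeet S12 S22
      pure (.arrow j (l ⊓ l') m)
  | _, _ => none
end
/-- Gradual labels: a static label or the unknown label ?. -/
inductive GLabel (L : Type) where
  | lab (l : L)
  | unk

/-- Label concretization γ_ℓ. -/
def gammaL {L : Type} : GLabel L → Set L
  | .lab l => {l}
  | .unk => Set.univ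

/-- Label precision: ℓ̃₁ ⊑ ℓ̃₂ iff γ_ℓ(ℓ̃₁) ⊆ γ_ℓ(ℓ̃₂). -/
def lprec {L : Type} (a b : GLabel L) : Prop := gammaL a ⊆ gammaL b

-- Label abstraction α_ℓ: singleton sets map to their element, every other
-- nonempty set maps to ?. (It is undefined — arbitrary here — on the empty set.)
open Classical in
noncomputable def alphaL {L : Type} (C : Set L) : GLabel L :=
  if h : ∃ l, C = {l} then .lab h.choose else .unk

/-- Consistent label ordering ℓ̃₁ ≾ ℓ̃₂. -/
def clle {L : Type} [Lattice L] [BoundedOrder L] (a b : GLabel L) : Prop :=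
  ∃ l1 ∈ gammaL a, ∃ l2 ∈ gammaL b, l1 ≤ l2
/-- Gradual security types: S̃ ::= Bool_ℓ̃ | S̃ →_ℓ̃ S̃. -/
inductive GType (L : Type) where
  | bool (l : GLabel L)
  | arrow (S1 : GType L) (l : GLabel L) (S2 : GType L)

/-- Type concretization γ_S. -/
def gammaS {L : Type} : GType L → Set (SType L)
  | .bool g => {T | ∃ l ∈ gammaL g, T = .bool l}
  | .arrow G1 g G2 =>
      {T | ∃ T1 ∈ gammaS G1, ∃ T2 ∈ gammaS G2, ∃ l ∈ gammaL g, T = .arrow T1 l T2}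

/-- Type precision: S̃₁ ⊑ S̃₂ iff γ_S(S̃₁) ⊆ γ_S(S̃₂). -/
def gtprec {L : Type} (a b : GType L) : Prop := gammaS a ⊆ gammaS b

variable {L : Type} [Lattice L] [BoundedOrder L]

/-- Consistent subtyping S̃₁ ≲ S̃₂. -/
def ConsSub (a b : GType L) : Prop :=
  ∃ T1 ∈ gammaS a, ∃ T2 ∈ gammaS b, SSub T1 T2

/-- Gradual label join ⊔̃, as the abstraction of the lifted join. -/
noncomputable def gljoin (a b : GLabel L) : GLabel L :=
  alphaL {l | ∃ l1 ∈ gammaL a, ∃ l2 ∈ gammaL b, l = l1 ⊔ l2}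

/-- Gradual label meet ⊓̃, as the abstraction of the lifted meet. -/
noncomputable def glmeet (a b : GLabel L) : GLabel L :=
  alphaL {l | ∃ l1 ∈ gammaL a, ∃ l2 ∈ gammaL b, l = l1 ⊓ l2}

/-- Gradual label stamping on gradual types. -/
noncomputable def GType.stamp : GType L → GLabel L → GType L
  | .bool g, g' => .bool (gljoin g g')
  | .arrow S1 g S2, g' => .arrow S1 (gljoin g g') S2

mutual
/-- Gradual (partial) subtyping join ⋎̃. -/
noncomputable def ggsjoin : GType L → GType L → Option (GType L)
  | .bool a, .bool b => some (.bool (gljoin a b))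
  | .arrow S11 a S12, .arrow S21 b S22 => do
      let m ← ggsmeet S11 S21
      let j ← ggsjoin S12 S22
      pure (.arrow m (gljoin a b) j)
  | _, _ => none
/-- Gradual (partial) subtyping meet ⋏̃. -/
noncomputable def ggsmeet : GType L → GType L → Option (GType L)
  | .bool a, .bool b => some (.bool (glmeet a b))
  | .arrow S11 a S12, .arrow S21 b S22 => do
      let j ← ggsjoin S11 S21
      let m ← ggsmeet S12 S22
      pure (.arrow j (glmeet a b) m)
  | _, _ => none
end
/-- Gradual source terms of λ_S̃EC (with ascription). -/
inductive GTm (L : Type) where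
  | var (x : String)
  | bool (b : Bool) (l : GLabel L)
  | lam (x : String) (S : GType L) (t : GTm L) (l : GLabel L)
  | app (t1 t2 : GTm L)
  | binop (op : Bool → Bool → Bool) (t1 t2 : GTm L)
  | ite (t1 t2 t3 : GTm L)
  | asc (t : GTm L) (S : GType L)

abbrev GCtx (L : Type) := List (String × GType L)

variable {L : Type} [Lattice L] [BoundedOrder L]

/-- The gradual type system of λ_S̃EC. -/
inductive GT : GCtx L → GTm L → GType L → Prop where
  | var {Γ : GCtx L} {x S} : List.lookup x Γ = some S → GT Γ (.var x) S
  | bool {Γ : GCtx L} {b l} : GT Γ (.bool b l) (.bool l)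
  | lam {Γ : GCtx L} {x S1 t S2 l} :
      GT ((x, S1) :: Γ) t S2 → GT Γ (.lam x S1 t l) (.arrow S1 l S2)
  | binop {Γ : GCtx L} {op t1 t2 l1 l2} :
      GT Γ t1 (.bool l1) → GT Γ t2 (.bool l2) →
      GT Γ (.binop op t1 t2) (.bool (gljoin l1 l2))
  | app {Γ : GCtx L} {t1 t2 S11 l S12 S2} :
      GT Γ t1 (.arrow S11 l S12) → GT Γ t2 S2 → ConsSub S2 S11 →
      GT Γ (.app t1 t2) (S12.stamp l)
  | ite {Γ : GCtx L} {t1 t2 t3 l S1 S2 Sj} :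
      GT Γ t1 (.bool l) → GT Γ t2 S1 → GT Γ t3 S2 → ggsjoin S1 S2 = some Sj →
      GT Γ (.ite t1 t2 t3) (Sj.stamp l)
  | asc {Γ : GCtx L} {t S1 S2} :
      GT Γ t S1 → ConsSub S1 S2 → GT Γ (.asc t S2) S2
/-- Label precision lifted to precision on gradual terms (type annotations and
labels become less precise pointwise). -/
inductive TmPrec {L : Type} : GTm L → GTm L → Prop where
  | var {x} : TmPrec (.var x) (.var x)
  | bool {b l1 l2} : lprec l1 l2 → TmPrec (.bool b l1) (.bool b l2)
  | lam {x S1 S2 t1 t2 l1 l2} :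
      gtprec S1 S2 → TmPrec t1 t2 → lprec l1 l2 →
      TmPrec (.lam x S1 t1 l1) (.lam x S2 t2 l2)
  | app {t1 t2 t1' t2'} :
      TmPrec t1 t1' → TmPrec t2 t2' → TmPrec (.app t1 t2) (.app t1' t2')
  | binop {op t1 t2 t1' t2'} :
      TmPrec t1 t1' → TmPrec t2 t2' → TmPrec (.binop op t1 t2) (.binop op t1' t2')
  | ite {t1 t2 t3 t1' t2' t3'} :
      TmPrec t1 t1' → TmPrec t2 t2' → TmPrec t3 t3' →
      TmPrec (.ite t1 t2 t3) (.ite t1' t2' t3')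
  | asc {t t' S S'} :
      TmPrec t t' → gtprec S S' → TmPrec (.asc t S) (.asc t' S')

/-! ### Precision is structural -/

theorem gammaL_nonempty (g : GLabel L) : (gammaL g).Nonempty := by
  cases g with
  | lab l => exact ⟨l, rfl⟩
  | unk => exact ⟨⊥, trivial⟩

theorem gammaS_nonempty (G : GType L) : (gammaS G).Nonempty := by
  induction G with
  | bool g =>
    obtain ⟨l, hl⟩ := gammaL_nonempty g
    exact ⟨.bool l, l, hl, rfl⟩
  | arrow G1 g G2 ih1 ih2 =>
    obtain ⟨l, hl⟩ := gammaL_nonempty g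
    obtain ⟨T1, h1⟩ := ih1
    obtain ⟨T2, h2⟩ := ih2
    exact ⟨.arrow T1 l T2, T1, h1, T2, h2, l, hl, rfl⟩

theorem gtprec_bool {L : Type} {g g' : GLabel L} (h : lprec g g') : gtprec (.bool g) (.bool g') := by
  rintro T ⟨l, hl, rfl⟩
  exact ⟨l, h hl, rfl⟩

theorem gtprec_arrow {L : Type} {A A' B B' : GType L} {g g' : GLabel L} (hA : gtprec A A')
    (hg : lprec g g') (hB : gtprec B B') : gtprec (.arrow A g B) (.arrow A' g' B') := by
  rintro T ⟨T1, h1, T2, h2, l, hl, rfl⟩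
  exact ⟨T1, hA h1, T2, hB h2, l, hg hl, rfl⟩

theorem gtprec_bool_inv {g : GLabel L} {X : GType L} (h : gtprec (.bool g) X) :
    ∃ g', X = .bool g' ∧ lprec g g' := by
  cases X with
  | bool g' =>
    refine ⟨g', rfl, fun l hl => ?_⟩
    obtain ⟨l', hl', e⟩ := h ⟨l, hl, rfl⟩
    cases e
    exact hl'
  | arrow A g' B =>
    obtain ⟨l, hl⟩ := gammaL_nonempty g
    obtain ⟨_, _, _, _, _, _, e⟩ := h ⟨l, hl, rfl⟩
    cases e

/-- A member of the concretization of one component is completed to an arrow by witnesses of the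
nonemptiness of the other two. -/
theorem gtprec_arrow_inv {A B X : GType L} {g : GLabel L} (h : gtprec (.arrow A g B) X) :
    ∃ A' g' B', X = .arrow A' g' B' ∧ gtprec A A' ∧ lprec g g' ∧ gtprec B B' := by
  obtain ⟨l₀, hl₀⟩ := gammaL_nonempty g
  obtain ⟨P, hP⟩ := gammaS_nonempty A
  obtain ⟨Q, hQ⟩ := gammaS_nonempty B
  cases X with
  | bool g' =>
    obtain ⟨_, _, e⟩ := h ⟨P, hP, Q, hQ, l₀, hl₀, rfl⟩
    cases e
  | arrow A' g' B' =>
    refine ⟨A', g', B', rfl, fun T hT => ?_, fun l hl => ?_, fun T hT => ?_⟩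
    · obtain ⟨_, h1, _, h2, _, h3, e⟩ := h ⟨T, hT, Q, hQ, l₀, hl₀, rfl⟩
      cases e
      exact h1
    · obtain ⟨_, h1, _, h2, _, h3, e⟩ := h ⟨P, hP, Q, hQ, l, hl, rfl⟩
      cases e
      exact h3
    · obtain ⟨_, h1, _, h2, _, h3, e⟩ := h ⟨P, hP, T, hT, l₀, hl₀, rfl⟩
      cases e
      exact h2

/-! ### Monotonicity of the type-level operations -/

/-- `C` must be nonempty: `alphaL ∅` is the arbitrary value `?`, which is not below a label
unless `L` has a single element. -/
theorem alphaL_mono {L : Type} {C D : Set L} (hC : C.Nonempty) (h : C ⊆ D) :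
    lprec (alphaL C) (alphaL D) := by
  unfold lprec
  by_cases hD : ∃ d, D = {d}
  · -- A nonempty subset of a singleton is that singleton.
    have hCD : C = D := by
      obtain ⟨d, rfl⟩ := hD
      exact hC.subset_singleton_iff.mp h
    rw [hCD]
  · have e : alphaL D = .unk := by simp only [alphaL, hD, dite_false]
    rw [e]
    exact fun _ _ => trivial

theorem gljoin_mono {a a' b b' : GLabel L} (ha : lprec a a') (hb : lprec b b') :
    lprec (gljoin a b) (gljoin a' b') := by
  obtain ⟨x, hx⟩ := gammaL_nonempty a
  obtain ⟨y, hy⟩ := gammaL_nonempty b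
  refine alphaL_mono ⟨x ⊔ y, x, hx, y, hy, rfl⟩ ?_
  rintro l ⟨l1, h1, l2, h2, rfl⟩
  exact ⟨l1, ha h1, l2, hb h2, rfl⟩

theorem glmeet_mono {a a' b b' : GLabel L} (ha : lprec a a') (hb : lprec b b') :
    lprec (glmeet a b) (glmeet a' b') := by
  obtain ⟨x, hx⟩ := gammaL_nonempty a
  obtain ⟨y, hy⟩ := gammaL_nonempty b
  refine alphaL_mono ⟨x ⊓ y, x, hx, y, hy, rfl⟩ ?_
  rintro l ⟨l1, h1, l2, h2, rfl⟩
  exact ⟨l1, ha h1, l2, hb h2, rfl⟩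

theorem stamp_mono {S S' : GType L} {g g' : GLabel L} (hS : gtprec S S') (hg : lprec g g') :
    gtprec (S.stamp g) (S'.stamp g') := by
  cases S with
  | bool a =>
    obtain ⟨a', rfl, ha⟩ := gtprec_bool_inv hS
    exact gtprec_bool (gljoin_mono ha hg)
  | arrow A a B =>
    obtain ⟨A', a', B', rfl, hA, ha, hB⟩ := gtprec_arrow_inv hS
    exact gtprec_arrow hA (gljoin_mono ha hg) hB

theorem ConsSub.mono {A A' B B' : GType L} (h : ConsSub A B) (hA : gtprec A A')
    (hB : gtprec B B') : ConsSub A' B' := by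
  obtain ⟨T1, h1, T2, h2, hs⟩ := h
  exact ⟨T1, hA h1, T2, hB h2, hs⟩

/-- Join and meet are treated together, since each recurses into the other on arrow domains. -/
theorem ggsjoin_ggsmeet_mono (A : GType L) : ∀ B A' B' : GType L, gtprec A A' → gtprec B B' →
    (∀ J, ggsjoin A B = some J → ∃ J', ggsjoin A' B' = some J' ∧ gtprec J J') ∧
    (∀ M, ggsmeet A B = some M → ∃ M', ggsmeet A' B' = some M' ∧ gtprec M M') := by
  induction A with
  | bool a =>
    intro B A' B' hA hB
    obtain ⟨a', rfl, ha⟩ := gtprec_bool_inv hA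
    cases B with
    | bool b =>
      obtain ⟨b', rfl, hb⟩ := gtprec_bool_inv hB
      constructor
      · intro J hJ
        simp only [ggsjoin, Option.some.injEq] at hJ
        subst hJ
        exact ⟨_, by rw [ggsjoin], gtprec_bool (gljoin_mono ha hb)⟩
      · intro M hM
        simp only [ggsmeet, Option.some.injEq] at hM
        subst hM
        exact ⟨_, by rw [ggsmeet], gtprec_bool (glmeet_mono ha hb)⟩
    | arrow B1 b B2 => constructor <;> intro J hJ <;> simp [ggsjoin, ggsmeet] at hJ
  | arrow A1 a A2 ih1 ih2 =>
    intro B A' B' hA hB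
    obtain ⟨A1', a', A2', rfl, hA1, ha, hA2⟩ := gtprec_arrow_inv hA
    cases B with
    | bool b => constructor <;> intro J hJ <;> simp [ggsjoin, ggsmeet] at hJ
    | arrow B1 b B2 =>
      obtain ⟨B1', b', B2', rfl, hB1, hb, hB2⟩ := gtprec_arrow_inv hB
      obtain ⟨j1, m1⟩ := ih1 B1 A1' B1' hA1 hB1
      obtain ⟨j2, m2⟩ := ih2 B2 A2' B2' hA2 hB2
      constructor
      · intro J hJ
        simp only [ggsjoin, Option.bind_eq_bind, Option.bind_eq_some_iff, Option.pure_def,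
          Option.some.injEq] at hJ
        obtain ⟨P, hP, Q, hQ, rfl⟩ := hJ
        obtain ⟨P', hP', hPP⟩ := m1 P hP
        obtain ⟨Q', hQ', hQQ⟩ := j2 Q hQ
        exact ⟨.arrow P' (gljoin a' b') Q', by simp [ggsjoin, hP', hQ'],
          gtprec_arrow hPP (gljoin_mono ha hb) hQQ⟩
      · intro M hM
        simp only [ggsmeet, Option.bind_eq_bind, Option.bind_eq_some_iff, Option.pure_def,
          Option.some.injEq] at hM
        obtain ⟨P, hP, Q, hQ, rfl⟩ := hM
        obtain ⟨P', hP', hPP⟩ := j1 P hP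
        obtain ⟨Q', hQ', hQQ⟩ := m2 Q hQ
        exact ⟨.arrow P' (glmeet a' b') Q', by simp [ggsmeet, hP', hQ'],
          gtprec_arrow hPP (glmeet_mono ha hb) hQQ⟩

/-! ### The guarantee for open terms -/

/-- Context precision `Γ ⊑ Γ'`, stated through lookup: every variable bound in `Γ` is bound in
`Γ'` at a less precise type. `Γ'` may bind further variables. -/
def CtxPrec {L : Type} (Γ Γ' : GCtx L) : Prop :=
  ∀ x S, List.lookup x Γ = some S → ∃ S', List.lookup x Γ' = some S' ∧ gtprec S S'

theorem CtxPrec.cons {L : Type} {Γ Γ' : GCtx L} {S S' : GType L} (h : CtxPrec Γ Γ')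
    (hS : gtprec S S') (x : String) : CtxPrec ((x, S) :: Γ) ((x, S') :: Γ') := by
  intro y T hT
  rw [List.lookup_cons] at hT ⊢
  split at hT
  · cases hT
    exact ⟨S', by simp_all, hS⟩
  · obtain ⟨T', hT', hp⟩ := h y T hT
    exact ⟨T', by simp_all, hp⟩

theorem GT.mono {Γ : GCtx L} {t : GTm L} {S : GType L} (h : GT Γ t S) :
    ∀ (Γ' : GCtx L) (t' : GTm L), CtxPrec Γ Γ' → TmPrec t t' →
      ∃ S', GT Γ' t' S' ∧ gtprec S S' := by
  induction h with
  | var hx =>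
    intro Γ' t' hΓ ht
    cases ht
    obtain ⟨S', hS', hp⟩ := hΓ _ _ hx
    exact ⟨S', .var hS', hp⟩
  | bool =>
    intro Γ' t' hΓ ht
    cases ht with
    | bool hl => exact ⟨_, .bool, gtprec_bool hl⟩
  | lam _ ih =>
    intro Γ' t' hΓ ht
    cases ht with
    | lam hS ht hl =>
      obtain ⟨S', hS', hp⟩ := ih _ _ (hΓ.cons hS _) ht
      exact ⟨_, .lam hS', gtprec_arrow hS hl hp⟩
  | binop _ _ ih1 ih2 =>
    intro Γ' t' hΓ ht
    cases ht with
    | binop ht1 ht2 =>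
      obtain ⟨S1, h1, p1⟩ := ih1 _ _ hΓ ht1
      obtain ⟨S2, h2, p2⟩ := ih2 _ _ hΓ ht2
      obtain ⟨l1, rfl, q1⟩ := gtprec_bool_inv p1
      obtain ⟨l2, rfl, q2⟩ := gtprec_bool_inv p2
      exact ⟨_, .binop h1 h2, gtprec_bool (gljoin_mono q1 q2)⟩
  | app _ _ hs ih1 ih2 =>
    intro Γ' t' hΓ ht
    cases ht with
    | app ht1 ht2 =>
      obtain ⟨S1, h1, p1⟩ := ih1 _ _ hΓ ht1
      obtain ⟨S2, h2, p2⟩ := ih2 _ _ hΓ ht2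
      obtain ⟨A, l, B, rfl, qA, ql, qB⟩ := gtprec_arrow_inv p1
      exact ⟨_, .app h1 h2 (hs.mono p2 qA), stamp_mono qB ql⟩
  | ite _ _ _ hj ih1 ih2 ih3 =>
    intro Γ' t' hΓ ht
    cases ht with
    | ite ht1 ht2 ht3 =>
      obtain ⟨S1, h1, p1⟩ := ih1 _ _ hΓ ht1
      obtain ⟨S2, h2, p2⟩ := ih2 _ _ hΓ ht2
      obtain ⟨S3, h3, p3⟩ := ih3 _ _ hΓ ht3
      obtain ⟨l, rfl, ql⟩ := gtprec_bool_inv p1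
      obtain ⟨J, hJ, pJ⟩ := (ggsjoin_ggsmeet_mono _ _ _ _ p2 p3).1 _ hj
      exact ⟨_, .ite h1 h2 h3 hJ, stamp_mono pJ ql⟩
  | asc _ hs ih =>
    intro Γ' t' hΓ ht
    cases ht with
    | asc ht hS =>
      obtain ⟨S1, h1, p1⟩ := ih _ _ hΓ ht
      exact ⟨_, .asc h1 (hs.mono p1 hS), hS⟩

/-- the static gradual guarantee for λ_S̃EC. -/
theorem static_gradual_guarantee {L : Type} [Lattice L] [BoundedOrder L]
    (t1 t2 : GTm L) (S1 : GType L)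
    (h1 : GT [] t1 S1) (hp : TmPrec t1 t2) :
    ∃ S2 : GType L, GT [] t2 S2 ∧ gtprec S1 S2 :=
  h1.mono [] t2 (fun _ S hS => ⟨S, hS, subset_rfl⟩) hp
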